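/- arXiv:2007.06543 — 6 statements merged into one kernel-verified Lean document; each statement's English description precedes it below -/
import Mathlib

section
/- Let V0, V1, V2 be real numbers with V := V1*V2 + V0*V2 + V0*V1 ≠ 0, and let V̂ be the 3×3 real matrix with V̂_{mm} = 2*V_m and V̂_{mn} = -V_n for m ≠ n. Then ρ := (V1*V2/V, V0*V2/V, V0*V1/V) is the UNIQUE vector x ∈ ℝ³ satisfying V̂ x = 0 and x_0 + x_1 + x_2 = 1. -/
/-- The directing matrix of a ternary statistical experiment:
`V̂_{mm} = 2 V_m`, `V̂_{mn} = -V_n` for `m ≠ n`. -/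
def dirMatrix (V0 V1 V2 : ℝ) : Matrix (Fin 3) (Fin 3) ℝ :=
  !![2*V0, -V1, -V2;
     -V0, 2*V1, -V2;
     -V0, -V1, 2*V2]

/-- The equilibrium vector `ρ = (V1V2/V, V0V2/V, V0V1/V)` with
`V = V1V2 + V0V2 + V0V1`. -/
noncomputable def equil (V0 V1 V2 : ℝ) : Fin 3 → ℝ :=
  ![V1*V2 / (V1*V2 + V0*V2 + V0*V1),
    V0*V2 / (V1*V2 + V0*V2 + V0*V1),
    V0*V1 / (V1*V2 + V0*V2 + V0*V1)]

/-!
Each row of `V̂ x = 0` says `N * (v m * x m) = ∑ n, v n * x n`, with `N` the number of indices. The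
right-hand side does not depend on `m`, so as soon as `N ≠ 0` the equation says exactly
that `v m * x m` is constant in `m`. Writing `P m` for the product of all `v n` with `n ≠ m`, this
gives `x m * P k = x k * P m`, and summing over `k` with `∑ k, x k = 1` yields
`x m * ∑ k, P k = P m`. Conversely `v m * P m = ∏ n, v n` is constant in `m`.
-/

variable {ι : Type*} [Fintype ι] [DecidableEq ι]

/-- The directing matrix of an experiment with outcomes `ι` and directing parameters `v`, written as
a multiple of a diagonal matrix minus a rank-one matrix. With `N = Fintype.card ι`, the diagonal
entries are `(N - 1) * v m` and the off-diagonal ones `-v n`. -/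
def naryDirMatrix {R : Type*} [Ring R] (v : ι → R) : Matrix ι ι R :=
  Matrix.diagonal (fun m ↦ (Fintype.card ι : R) * v m) - Matrix.replicateRow ι v

/-- The product of all the directing parameters except the one with index `m`: the unnormalized
`m`-th coordinate of the equilibrium. -/
def prodOmit {M : Type*} [CommMonoid M] (v : ι → M) (m : ι) : M :=
  ∏ n ∈ Finset.univ.erase m, v n

/-- The equilibrium of the experiment with directing parameters `v`: the vector `prodOmit v`
normalized to have coordinate sum `1`, which requires `∑ k, prodOmit v k ≠ 0`. -/
def naryEquil {K : Type*} [Field K] (v : ι → K) (m : ι) : K :=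
  prodOmit v m / ∑ k, prodOmit v k

section DirectingMatrix

variable {R : Type*} [Ring R]

lemma naryDirMatrix_mulVec_apply (v x : ι → R) (m : ι) :
    (naryDirMatrix v).mulVec x m = Fintype.card ι * (v m * x m) - ∑ n, v n * x n := by
  have hrow : (Matrix.replicateRow ι v).mulVec x m = ∑ n, v n * x n := rfl
  rw [naryDirMatrix, Matrix.sub_mulVec, Pi.sub_apply, Matrix.mulVec_diagonal, hrow, mul_assoc]

lemma naryDirMatrix_mulVec_eq_zero_iff [NoZeroDivisors R] (hcard : (Fintype.card ι : R) ≠ 0)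
    {v x : ι → R} :
    (naryDirMatrix v).mulVec x = 0 ↔ ∀ m k, v m * x m = v k * x k := by
  simp only [funext_iff, naryDirMatrix_mulVec_apply, Pi.zero_apply, sub_eq_zero]
  constructor
  · intro h m k
    exact mul_left_cancel₀ hcard ((h m).trans (h k).symm)
  · intro h m
    simp only [h _ m, Finset.sum_const, Finset.card_univ, nsmul_eq_mul]

end DirectingMatrix

section ProdOmit

variable {M : Type*} [CommMonoid M]

lemma mul_prodOmit (v : ι → M) (m : ι) : v m * prodOmit v m = ∏ n, v n :=
  Finset.mul_prod_erase _ v (Finset.mem_univ m)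

lemma mul_prodOmit_comm {v x : ι → M} (h : ∀ m k, v m * x m = v k * x k) (m k : ι) :
    x m * prodOmit v k = x k * prodOmit v m := by
  obtain rfl | hmk := eq_or_ne m k
  · rfl
  have hk : prodOmit v k = v m * ∏ n ∈ (Finset.univ.erase k).erase m, v n :=
    (Finset.mul_prod_erase _ v (Finset.mem_erase.2 ⟨hmk, Finset.mem_univ m⟩)).symm
  have hm : prodOmit v m = v k * ∏ n ∈ (Finset.univ.erase k).erase m, v n := by
    rw [Finset.erase_right_comm]
    exact (Finset.mul_prod_erase _ v (Finset.mem_erase.2 ⟨hmk.symm, Finset.mem_univ k⟩)).symm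
  rw [hk, hm, ← mul_assoc, ← mul_assoc, mul_comm (x m), mul_comm (x k), h m k]

end ProdOmit

lemma mul_sum_prodOmit {R : Type*} [CommSemiring R] {v x : ι → R}
    (h : ∀ m k, v m * x m = v k * x k) (hx : ∑ k, x k = 1) (m : ι) :
    x m * ∑ k, prodOmit v k = prodOmit v m :=
  calc x m * ∑ k, prodOmit v k = ∑ k, x k * prodOmit v m := by
        simp only [Finset.mul_sum, mul_prodOmit_comm h m]
    _ = prodOmit v m := by rw [← Finset.sum_mul, hx, one_mul]

section Equilibrium

variable {K : Type*} [Field K]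

lemma mul_naryEquil (v : ι → K) (m : ι) :
    v m * naryEquil v m = (∏ n, v n) / ∑ k, prodOmit v k := by
  rw [naryEquil, ← mul_div_assoc, mul_prodOmit]

lemma sum_naryEquil {v : ι → K} (hv : ∑ k, prodOmit v k ≠ 0) : ∑ m, naryEquil v m = 1 := by
  simp only [naryEquil, ← Finset.sum_div, div_self hv]

theorem equilibrium_unique_general (hcard : (Fintype.card ι : K) ≠ 0) {v : ι → K}
    (hv : ∑ k, prodOmit v k ≠ 0) (x : ι → K) :
    ((naryDirMatrix v).mulVec x = 0 ∧ ∑ k, x k = 1) ↔ x = naryEquil v := by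
  rw [naryDirMatrix_mulVec_eq_zero_iff hcard]
  constructor
  · rintro ⟨hconst, hsum⟩
    funext m
    exact (eq_div_iff hv).2 (mul_sum_prodOmit hconst hsum m)
  · rintro rfl
    exact ⟨fun m k ↦ by rw [mul_naryEquil, mul_naryEquil], sum_naryEquil hv⟩

end Equilibrium

section Ternary

lemma prodOmit_fin_three {M : Type*} [CommMonoid M] (a b c : M) :
    prodOmit ![a, b, c] = ![b * c, a * c, a * b] := by
  have erase_zero : (Finset.univ.erase 0 : Finset (Fin 3)) = {1, 2} := rfl
  have erase_one : (Finset.univ.erase 1 : Finset (Fin 3)) = {0, 2} := rfl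
  have erase_two : (Finset.univ.erase 2 : Finset (Fin 3)) = {0, 1} := rfl
  funext m
  fin_cases m <;> simp [prodOmit, erase_zero, erase_one, erase_two]

lemma sum_prodOmit_fin_three {R : Type*} [CommSemiring R] (a b c : R) :
    ∑ k, prodOmit ![a, b, c] k = b * c + a * c + a * b := by
  simp [prodOmit_fin_three, Fin.sum_univ_three]

lemma naryDirMatrix_fin_three (V0 V1 V2 : ℝ) :
    naryDirMatrix ![V0, V1, V2] = dirMatrix V0 V1 V2 := by
  ext m n
  fin_cases m <;> fin_cases n <;>
    simp [naryDirMatrix, dirMatrix] <;> ring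

lemma naryEquil_fin_three (V0 V1 V2 : ℝ) : naryEquil ![V0, V1, V2] = equil V0 V1 V2 := by
  funext m
  rw [naryEquil, sum_prodOmit_fin_three, prodOmit_fin_three]
  fin_cases m <;> rfl

end Ternary

theorem equilibrium_unique (V0 V1 V2 : ℝ)
    (hV : V1*V2 + V0*V2 + V0*V1 ≠ 0) :
    ∀ x : Fin 3 → ℝ,
      ((dirMatrix V0 V1 V2).mulVec x = 0 ∧ x 0 + x 1 + x 2 = 1) ↔
        x = equil V0 V1 V2 := by
  rw [← sum_prodOmit_fin_three] at hV
  simpa only [naryDirMatrix_fin_three, naryEquil_fin_three, Fin.sum_univ_three] using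
    equilibrium_unique_general (by simp) hV
end

section
/- Let V0, V1, V2 be real numbers with V := V1*V2 + V0*V2 + V0*V1 ≠ 0, and let V̂ be the 3×3 real matrix with V̂_{mm} = 2*V_m and V̂_{mn} = -V_n for m ≠ n. Then the kernel of V̂ (as a linear map ℝ³ → ℝ³) equals the one-dimensional span of the vector (V1*V2, V0*V2, V0*V1). -/
/-!
Write `N` for the number of parameters and `w m = ∏_{n ≠ m} V n`. The `m`-th entry of `V̂ x` is
`N * (V m * x m) - ∑ n, V n * x n`, so, as `N` can be cancelled, `V̂ x = 0` says exactly that all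
the products `V m * x m` agree. The vector `w` has this property, since `V m * w m` is the product
of all parameters. Conversely, the property gives `w m * x n = w n * x m`, since both are a product
`V k * x k` times the product of the parameters other than `V m` and `V n`; summing over `n` yields
`(∑ n, w n) * x m = (∑ n, x n) * w m`, and `∑ n, w n` is invertible.
-/

section EquilibriumWeight

open Finset

variable {ι R : Type*} [Fintype ι] [DecidableEq ι] [CommSemiring R]

/-- The equilibrium vector of the directing parameters `V` before normalization. Each entry is the
product of the other parameters, which avoids dividing by parameters that may vanish. -/
def equilibriumWeight (V : ι → R) (m : ι) : R :=
  ∏ n ∈ univ.erase m, V n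

theorem mul_equilibriumWeight (V : ι → R) (m : ι) :
    V m * equilibriumWeight V m = ∏ n, V n :=
  mul_prod_erase univ V (mem_univ m)

theorem equilibriumWeight_eq_prod_mul (V : ι → R) {m n : ι} (hmn : m ≠ n) :
    equilibriumWeight V m = (∏ k ∈ (univ.erase m).erase n, V k) * V n :=
  (prod_erase_mul _ V (mem_erase.mpr ⟨hmn.symm, mem_univ n⟩)).symm

theorem equilibriumWeight_mul_comm {V x : ι → R} (h : ∀ m n, V m * x m = V n * x n) (m n : ι) :
    equilibriumWeight V m * x n = equilibriumWeight V n * x m := by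
  rcases eq_or_ne m n with rfl | hmn
  · rfl
  · rw [equilibriumWeight_eq_prod_mul V hmn, equilibriumWeight_eq_prod_mul V hmn.symm,
      erase_right_comm, mul_assoc, mul_assoc, h n m]

theorem sum_equilibriumWeight_smul_eq {V x : ι → R} (h : ∀ m n, V m * x m = V n * x n) :
    (∑ n, equilibriumWeight V n) • x = (∑ n, x n) • equilibriumWeight V := by
  ext m
  calc (∑ n, equilibriumWeight V n) * x m
      = ∑ n, equilibriumWeight V m * x n := by
        simp only [sum_mul, equilibriumWeight_mul_comm h m]
    _ = (∑ n, x n) * equilibriumWeight V m := by rw [← mul_sum, mul_comm]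

theorem mem_span_equilibriumWeight_iff {V x : ι → R}
    (hV : IsUnit (∑ n, equilibriumWeight V n)) :
    x ∈ Submodule.span R {equilibriumWeight V} ↔ ∀ m n, V m * x m = V n * x n := by
  constructor
  · rw [Submodule.mem_span_singleton]
    rintro ⟨c, rfl⟩ m n
    simp only [Pi.smul_apply, smul_eq_mul, mul_left_comm _ c, mul_equilibriumWeight]
  · intro h
    rw [← Submodule.smul_mem_iff_of_isUnit _ hV, sum_equilibriumWeight_smul_eq h]
    exact Submodule.smul_mem _ _ (Submodule.mem_span_singleton_self _)

theorem equilibriumWeight_fin_three (V0 V1 V2 : R) :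
    equilibriumWeight ![V0, V1, V2] = ![V1 * V2, V0 * V2, V0 * V1] := by
  ext i
  fin_cases i
  · simp [equilibriumWeight, show univ.erase (0 : Fin 3) = {1, 2} by decide]
  · simp [equilibriumWeight, show univ.erase (1 : Fin 3) = {0, 2} by decide]
  · simp [equilibriumWeight, show univ.erase (2 : Fin 3) = {0, 1} by decide]

end EquilibriumWeight

section DirectingMatrix

open Matrix

variable {ι R : Type*} [Fintype ι] [DecidableEq ι] [CommRing R]

/-- The directing matrix of a statistical experiment with parameters `V` indexed by a finite type
of cardinality `N`: its entries are `(N - 1) * V m` at `(m, m)` and `-V n` at `(m, n)` for `m ≠ n`,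
written as `N` times a diagonal matrix minus the matrix all of whose rows are `V`. -/
def directingMatrix (V : ι → R) : Matrix ι ι R :=
  (Fintype.card ι : R) • diagonal V - replicateRow ι V

theorem directingMatrix_mulVec_apply (V x : ι → R) (m : ι) :
    (directingMatrix V *ᵥ x) m = Fintype.card ι * (V m * x m) - ∑ n, V n * x n := by
  simp [directingMatrix, sub_mulVec, smul_mulVec, mulVec_diagonal,
    show (replicateRow ι V *ᵥ x) m = ∑ n, V n * x n from rfl]

theorem directingMatrix_mulVec_eq_zero_iff (hN : IsLeftRegular (Fintype.card ι : R))
    {V x : ι → R} :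
    directingMatrix V *ᵥ x = 0 ↔ ∀ m n, V m * x m = V n * x n := by
  simp only [funext_iff, directingMatrix_mulVec_apply, Pi.zero_apply, sub_eq_zero]
  constructor
  · intro h m n
    exact hN ((h m).trans (h n).symm)
  · intro h m
    simp [← h m]

theorem kernel_eq_span_general (hN : IsLeftRegular (Fintype.card ι : R)) {V : ι → R}
    (hV : IsUnit (∑ n, equilibriumWeight V n)) :
    LinearMap.ker (directingMatrix V).mulVecLin = Submodule.span R {equilibriumWeight V} := by
  ext x
  rw [LinearMap.mem_ker, mulVecLin_apply, directingMatrix_mulVec_eq_zero_iff hN,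
    mem_span_equilibriumWeight_iff hV]

theorem directingMatrix_fin_three (V0 V1 V2 : ℝ) :
    directingMatrix ![V0, V1, V2] = dirMatrix V0 V1 V2 := by
  ext i j
  fin_cases i <;> fin_cases j <;> simp [directingMatrix, dirMatrix] <;> ring

end DirectingMatrix

theorem kernel_eq_span (V0 V1 V2 : ℝ)
    (hV : V1*V2 + V0*V2 + V0*V1 ≠ 0) :
    LinearMap.ker (Matrix.mulVecLin (dirMatrix V0 V1 V2)) =
      Submodule.span ℝ {![V1*V2, V0*V2, V0*V1]} := by
  rw [← directingMatrix_fin_three, ← equilibriumWeight_fin_three]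
  refine kernel_eq_span_general (IsRegular.of_ne_zero (by simp)).left ?_
  simpa [equilibriumWeight_fin_three, Fin.sum_univ_three] using hV
end

section
/- Let V0, V1, V2 be strictly positive real numbers and let V̂ be the 3×3 real matrix with V̂_{mm} = 2*V_m and V̂_{mn} = -V_n for m ≠ n. Then every nonzero complex eigenvalue λ of V̂ has strictly positive real part. Concretely, the nonzero eigenvalues are the roots of λ² - 2(V0+V1+V2)λ + 3V with V := V1*V2 + V0*V2 + V0*V1, and each root has positive real part. -/
open Polynomial in
theorem charpoly_dirMatrix (V0 V1 V2 : ℝ) :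
    (dirMatrix V0 V1 V2).charpoly =
      X * (X ^ 2 - C (2 * (V0 + V1 + V2)) * X + C (3 * (V1 * V2 + V0 * V2 + V0 * V1))) := by
  rw [Matrix.charpoly, Matrix.det_fin_three]
  simp only [dirMatrix, Matrix.charmatrix_apply_eq, Matrix.charmatrix_apply_ne, Matrix.of_apply,
    Matrix.cons_val', Matrix.cons_val_zero, Matrix.cons_val_one, Matrix.cons_val,
    Matrix.cons_val_fin_one, ne_eq, Fin.reduceEq, not_false_eq_true, zero_ne_one, one_ne_zero,
    map_mul, map_add, map_neg, map_ofNat, neg_neg]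
  ring

theorem hasEigenvalue_dirMatrix_iff (V0 V1 V2 : ℝ) (μ : ℂ) :
    Module.End.HasEigenvalue
        (Matrix.mulVecLin ((dirMatrix V0 V1 V2).map Complex.ofReal)) μ ↔
      μ = 0 ∨ μ ^ 2 - 2 * (↑V0 + ↑V1 + ↑V2) * μ
        + 3 * ((V1 * V2 + V0 * V2 + V0 * V1 : ℝ) : ℂ) = 0 := by
  have charpoly_map : ((dirMatrix V0 V1 V2).map Complex.ofReal).charpoly =
      (dirMatrix V0 V1 V2).charpoly.map Complex.ofRealHom :=
    Matrix.charpoly_map _ Complex.ofRealHom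
  rw [Module.End.hasEigenvalue_iff_isRoot_charpoly, Matrix.charpoly_mulVecLin, charpoly_map,
    charpoly_dirMatrix]
  simp

theorem re_pos_of_quadratic_eq_zero {b c : ℝ} (hb : 0 < b) (hc : 0 < c) {z : ℂ}
    (hz : z ^ 2 - b * z + c = 0) : 0 < z.re := by
  have hz0 : z ≠ 0 := by
    rintro rfl
    simp [hc.ne'] at hz
  have hnorm : 0 < Complex.normSq z := Complex.normSq_pos.mpr hz0
  -- Multiplying the equation by `conj z` makes the coefficient of `z.re` real and positive.
  have hconj : (Complex.normSq z : ℂ) * z + c * starRingEnd ℂ z = b * Complex.normSq z := by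
    rw [← Complex.mul_conj]
    linear_combination starRingEnd ℂ z * hz
  have hre : (Complex.normSq z + c) * z.re = b * Complex.normSq z := by
    simpa [add_mul] using congrArg Complex.re hconj
  have hprod : 0 < (Complex.normSq z + c) * z.re := hre ▸ mul_pos hb hnorm
  exact pos_of_mul_pos_right hprod (add_pos hnorm hc).le

theorem eigenvalues_pos_re_of_pos_general (V0 V1 V2 : ℝ)
    (hsum : 0 < V0 + V1 + V2) (hV : 0 < V1 * V2 + V0 * V2 + V0 * V1) :
    (∀ μ : ℂ, Module.End.HasEigenvalue
        (Matrix.mulVecLin ((dirMatrix V0 V1 V2).map Complex.ofReal)) μ →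
        μ ≠ 0 → 0 < μ.re) ∧
    (∀ μ : ℂ, μ ≠ 0 →
      (Module.End.HasEigenvalue
          (Matrix.mulVecLin ((dirMatrix V0 V1 V2).map Complex.ofReal)) μ ↔
        μ ^ 2 - 2 * (↑V0 + ↑V1 + ↑V2) * μ
          + 3 * ((V1 * V2 + V0 * V2 + V0 * V1 : ℝ) : ℂ) = 0)) ∧
    (∀ μ : ℂ, μ ^ 2 - 2 * (↑V0 + ↑V1 + ↑V2) * μ
          + 3 * ((V1 * V2 + V0 * V2 + V0 * V1 : ℝ) : ℂ) = 0 → 0 < μ.re) := by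
  have roots_re_pos : ∀ μ : ℂ, μ ^ 2 - 2 * (↑V0 + ↑V1 + ↑V2) * μ
      + 3 * ((V1 * V2 + V0 * V2 + V0 * V1 : ℝ) : ℂ) = 0 → 0 < μ.re := by
    intro μ hμ
    refine re_pos_of_quadratic_eq_zero (mul_pos two_pos hsum) (mul_pos three_pos hV) ?_
    push_cast at hμ ⊢
    exact hμ
  have eigenvalue_iff (μ : ℂ) (hμ : μ ≠ 0) :=
    (hasEigenvalue_dirMatrix_iff V0 V1 V2 μ).trans (or_iff_right hμ)
  exact ⟨fun μ heig hμ => roots_re_pos μ ((eigenvalue_iff μ hμ).mp heig),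
    eigenvalue_iff, roots_re_pos⟩

theorem eigenvalues_pos_re_of_pos (V0 V1 V2 : ℝ)
    (h0 : 0 < V0) (h1 : 0 < V1) (h2 : 0 < V2) :
    (∀ μ : ℂ, Module.End.HasEigenvalue
        (Matrix.mulVecLin ((dirMatrix V0 V1 V2).map Complex.ofReal)) μ →
        μ ≠ 0 → 0 < μ.re) ∧
    (∀ μ : ℂ, μ ≠ 0 →
      (Module.End.HasEigenvalue
          (Matrix.mulVecLin ((dirMatrix V0 V1 V2).map Complex.ofReal)) μ ↔
        μ ^ 2 - 2 * (↑V0 + ↑V1 + ↑V2) * μ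
          + 3 * ((V1*V2 + V0*V2 + V0*V1 : ℝ) : ℂ) = 0)) ∧
    (∀ μ : ℂ, μ ^ 2 - 2 * (↑V0 + ↑V1 + ↑V2) * μ
          + 3 * ((V1*V2 + V0*V2 + V0*V1 : ℝ) : ℂ) = 0 → 0 < μ.re) := by
  exact eigenvalues_pos_re_of_pos_general V0 V1 V2 (by positivity) (by positivity)
end

section
/- Let V0, V1, V2 be strictly positive real numbers, let V̂ be the 3×3 real matrix with V̂_{mm} = 2*V_m and V̂_{mn} = -V_n for m ≠ n, set V := V1*V2 + V0*V2 + V0*V1 and ρ := (V1*V2/V, V0*V2/V, V0*V1/V). Then there exists ε₀ > 0 such that for every step size ε with 0 < ε ≤ ε₀ and every sequence P : ℕ → ℝ³ satisfying P(k+1) - P(k) = -ε V̂ P(k) for all k ≥ 0 and the balance condition P_0(0) + P_1(0) + P_2(0) = 1, one has P(k) → ρ as k → ∞; in particular the main factor probability satisfies lim_{k→∞} P_0(k) = ρ_0 (attractive equilibrium). -/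
/-!
For small `ε` the matrix `A = 1 - ε V̂` is column stochastic with positive entries, and the
recursion reads `P (k + 1) = A P (k)`. If every entry of the `i`-th row of `A` is at least `μ i`,
then on vectors `x` of zero sum one may replace `A i j` by `A i j - μ i ≥ 0`, so `A` contracts the
`ℓ¹`-norm of such vectors by the factor `1 - ∑ i, μ i` (Doeblin's argument). A `μ` supported on a
single positive row already makes this factor less than `1`. Since `P (k) - ρ` has zero sum, it
tends to `0` geometrically.
-/

open Filter Matrix Topology

theorem sum_abs_mulVec_le_of_sum_eq_zero {R m n : Type*} [Ring R] [LinearOrder R]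
    [IsStrictOrderedRing R] [Fintype m] [Fintype n] {A : Matrix m n R} {μ : m → R} {c : R}
    (hμ : ∀ i j, μ i ≤ A i j) (hc : ∀ j, ∑ i, A i j ≤ c) {x : n → R} (hx : ∑ j, x j = 0) :
    ∑ i, |(A *ᵥ x) i| ≤ (c - ∑ i, μ i) * ∑ j, |x j| := by
  have hshift (i : m) : (A *ᵥ x) i = ∑ j, (A i j - μ i) * x j := by
    simp [mulVec, dotProduct, sub_mul, ← Finset.mul_sum, hx]
  have hrow (i : m) : |(A *ᵥ x) i| ≤ ∑ j, (A i j - μ i) * |x j| := calc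
    |(A *ᵥ x) i| ≤ ∑ j, |(A i j - μ i) * x j| := hshift i ▸ Finset.abs_sum_le_sum_abs _ _
    _ = ∑ j, (A i j - μ i) * |x j| := by
      simp only [abs_mul, abs_of_nonneg (sub_nonneg.2 (hμ i _))]
  calc
    ∑ i, |(A *ᵥ x) i| ≤ ∑ i, ∑ j, (A i j - μ i) * |x j| := Finset.sum_le_sum fun i _ ↦ hrow i
    _ = ∑ j, (∑ i, A i j - ∑ i, μ i) * |x j| := by
      rw [Finset.sum_comm]
      simp only [← Finset.sum_mul, Finset.sum_sub_distrib]
    _ ≤ ∑ j, (c - ∑ i, μ i) * |x j| := by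
      gcongr with j
      exact hc j
    _ = (c - ∑ i, μ i) * ∑ j, |x j| := (Finset.mul_sum ..).symm

section StochasticIteration

variable {ι : Type*} [Fintype ι] [DecidableEq ι] {A : Matrix ι ι ℝ}

theorem exists_sum_abs_mulVec_le_of_mem_colStochastic (hA : A ∈ colStochastic ℝ ι) {i₀ : ι}
    (hrow : ∀ j, 0 < A i₀ j) :
    ∃ r < 1, ∀ x : ι → ℝ, ∑ i, x i = 0 → ∑ i, |(A *ᵥ x) i| ≤ r * ∑ i, |x i| := by
  have : Nonempty ι := ⟨i₀⟩
  obtain ⟨j₀, hj₀⟩ := Finite.exists_min (A i₀)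
  refine ⟨1 - A i₀ j₀, sub_lt_self 1 (hrow j₀), fun x hx ↦ ?_⟩
  have hμ (i j : ι) : Pi.single (M := fun _ ↦ ℝ) i₀ (A i₀ j₀) i ≤ A i j := by
    obtain rfl | hi := eq_or_ne i i₀
    · simpa using hj₀ j
    · simpa [hi] using nonneg_of_mem_colStochastic hA
  simpa using
    sum_abs_mulVec_le_of_sum_eq_zero hμ (fun j ↦ (sum_col_of_mem_colStochastic hA j).le) hx

theorem tendsto_zero_of_mem_colStochastic (hA : A ∈ colStochastic ℝ ι) {i₀ : ι}
    (hrow : ∀ j, 0 < A i₀ j) {x : ℕ → ι → ℝ} (hstep : ∀ k, x (k + 1) = A *ᵥ x k)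
    (hsum : ∑ i, x 0 i = 0) : Tendsto x atTop (𝓝 0) := by
  obtain ⟨r, hr, hcontr⟩ := exists_sum_abs_mulVec_le_of_mem_colStochastic hA hrow
  have hzero (k : ℕ) : ∑ i, x k i = 0 := by
    induction k with
    | zero => exact hsum
    | succ k ih => rw [hstep, sum_mulVec_of_mem_colStochastic hA, ih]
  have hratio (k : ℕ) : ‖∑ i, |x (k + 1) i|‖ ≤ r * ‖∑ i, |x k i|‖ := by
    simpa only [Real.norm_eq_abs, Finset.abs_sum_of_nonneg' fun _ ↦ abs_nonneg _, hstep]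
      using hcontr (x k) (hzero k)
  have hnorm : Tendsto (fun k ↦ ∑ i, |x k i|) atTop (𝓝 0) :=
    (summable_of_ratio_norm_eventually_le hr (.of_forall hratio)).tendsto_atTop_zero
  refine tendsto_pi_nhds.2 fun i ↦ squeeze_zero_norm (fun k ↦ ?_) hnorm
  exact Finset.single_le_sum (f := fun i ↦ |x k i|) (fun _ _ ↦ abs_nonneg _) (Finset.mem_univ i)

theorem tendsto_of_mem_colStochastic (hA : A ∈ colStochastic ℝ ι) {i₀ : ι}
    (hrow : ∀ j, 0 < A i₀ j) {ρ : ι → ℝ} (hρ : A *ᵥ ρ = ρ) {P : ℕ → ι → ℝ}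
    (hstep : ∀ k, P (k + 1) = A *ᵥ P k) (hsum : ∑ i, P 0 i = ∑ i, ρ i) :
    Tendsto P atTop (𝓝 ρ) := by
  refine tendsto_sub_nhds_zero_iff.1 (tendsto_zero_of_mem_colStochastic hA hrow (fun k ↦ ?_) ?_)
  · rw [hstep, mulVec_sub, hρ]
  · simp [hsum]

end StochasticIteration

theorem one_sub_smul_mem_colStochastic {R ι : Type*} [Ring R] [PartialOrder R] [IsOrderedRing R]
    [Fintype ι] [DecidableEq ι] {L : Matrix ι ι R} {ε : R} (hcol : ∀ j, ∑ i, L i j = 0)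
    (hoff : ∀ i j, i ≠ j → L i j ≤ 0) (hε : 0 ≤ ε) (hdiag : ∀ j, ε * L j j ≤ 1) :
    1 - ε • L ∈ colStochastic R ι := by
  refine mem_colStochastic_iff_sum.2 ⟨fun i j ↦ ?_, fun j ↦ ?_⟩
  · obtain rfl | hij := eq_or_ne i j
    · simpa using hdiag i
    · simpa [hij] using mul_nonpos_of_nonneg_of_nonpos hε (hoff i j hij)
  · simp [← Finset.mul_sum, hcol, Matrix.one_apply]

theorem one_sub_smul_apply_pos {R ι : Type*} [Ring R] [PartialOrder R] [IsStrictOrderedRing R]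
    [DecidableEq ι] {L : Matrix ι ι R} {ε : R} {i : ι} (hrow : ∀ j, j ≠ i → L i j < 0)
    (hε : 0 < ε) (hdiag : ε * L i i < 1) (j : ι) : 0 < (1 - ε • L) i j := by
  obtain rfl | hij := eq_or_ne j i
  · simpa using hdiag
  · simpa [hij.symm] using mul_neg_of_pos_of_neg hε (hrow j hij)

theorem attractive_equilibrium_general {ι : Type*} [Fintype ι] {L : Matrix ι ι ℝ}
    (hcol : ∀ j, ∑ i, L i j = 0) (hoff : ∀ i j, i ≠ j → L i j ≤ 0)
    (hrow : ∃ i, ∀ j, j ≠ i → L i j < 0) {ρ : ι → ℝ} (hρ : L *ᵥ ρ = 0) :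
    ∃ ε₀ > (0 : ℝ), ∀ ε : ℝ, 0 < ε → ε ≤ ε₀ → ∀ P : ℕ → ι → ℝ,
      (∀ k, P (k + 1) - P k = -(ε • L *ᵥ P k)) → ∑ i, P 0 i = ∑ i, ρ i →
        Tendsto P atTop (𝓝 ρ) := by
  classical
  obtain ⟨i, hi⟩ := hrow
  obtain ⟨M, hM⟩ := Finite.exists_le fun j ↦ L j j
  refine ⟨(|M| + 1)⁻¹, by positivity, fun ε hε hle P hP hsum ↦ ?_⟩
  have hdiag (j : ι) : ε * L j j < 1 := calc
    ε * L j j < ε * (|M| + 1) := by gcongr; linarith [hM j, le_abs_self M]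
    _ ≤ 1 := (le_inv_mul_iff₀' (by positivity)).1 (by simpa using hle)
  refine tendsto_of_mem_colStochastic
    (one_sub_smul_mem_colStochastic hcol hoff hε.le fun j ↦ (hdiag j).le)
    (one_sub_smul_apply_pos hi hε (hdiag i)) ?_ (fun k ↦ ?_) hsum
  · simp [sub_mulVec, smul_mulVec, hρ]
  · rw [sub_mulVec, one_mulVec, smul_mulVec, sub_eq_add_neg, ← hP, add_sub_cancel]

section DirectingMatrix

variable (V0 V1 V2 : ℝ)

theorem sum_dirMatrix_apply (j : Fin 3) : ∑ i, dirMatrix V0 V1 V2 i j = 0 := by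
  fin_cases j <;>
    simp only [dirMatrix, Fin.sum_univ_three, Fin.zero_eta, Fin.mk_one, Fin.reduceFinMk, of_apply,
      cons_val] <;>
    ring

variable {V0 V1 V2} in
theorem dirMatrix_apply_neg (h0 : 0 < V0) (h1 : 0 < V1) (h2 : 0 < V2) {i j : Fin 3}
    (hij : i ≠ j) : dirMatrix V0 V1 V2 i j < 0 := by
  fin_cases i <;> fin_cases j <;> simp_all [dirMatrix]

theorem dirMatrix_mulVec_equil : dirMatrix V0 V1 V2 *ᵥ equil V0 V1 V2 = 0 := by
  ext i
  fin_cases i <;>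
    simp only [dirMatrix, equil, mulVec, dotProduct, Fin.sum_univ_three, Fin.zero_eta, Fin.mk_one,
      Fin.reduceFinMk, of_apply, cons_val, Pi.zero_apply] <;>
    ring

variable {V0 V1 V2} in
theorem sum_equil (hV : V1 * V2 + V0 * V2 + V0 * V1 ≠ 0) : ∑ i, equil V0 V1 V2 i = 1 := by
  simp only [equil, Fin.sum_univ_three, cons_val]
  rw [← add_div, ← add_div, div_self hV]

end DirectingMatrix

theorem attractive_equilibrium (V0 V1 V2 : ℝ)
    (h0 : 0 < V0) (h1 : 0 < V1) (h2 : 0 < V2) :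
    ∃ ε₀ > (0:ℝ), ∀ ε : ℝ, 0 < ε → ε ≤ ε₀ →
      ∀ P : ℕ → Fin 3 → ℝ,
        (∀ k : ℕ, P (k+1) - P k = -(ε • (dirMatrix V0 V1 V2).mulVec (P k))) →
        P 0 0 + P 0 1 + P 0 2 = 1 →
        Filter.Tendsto P Filter.atTop (nhds (equil V0 V1 V2)) ∧
        Filter.Tendsto (fun k => P k 0) Filter.atTop (nhds (equil V0 V1 V2 0)) := by
  have hneg {i j : Fin 3} (hij : i ≠ j) : dirMatrix V0 V1 V2 i j < 0 :=
    dirMatrix_apply_neg h0 h1 h2 hij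
  obtain ⟨ε₀, hε₀, hlim⟩ := attractive_equilibrium_general (sum_dirMatrix_apply V0 V1 V2)
    (fun _ _ hij ↦ (hneg hij).le) ⟨0, fun _ hj ↦ hneg hj.symm⟩ (dirMatrix_mulVec_equil V0 V1 V2)
  refine ⟨ε₀, hε₀, fun ε hε hle P hP hsum ↦ ?_⟩
  have hP_lim : Tendsto P atTop (𝓝 (equil V0 V1 V2)) :=
    hlim ε hε hle P hP (by rw [sum_equil (by positivity), Fin.sum_univ_three, hsum])
  exact ⟨hP_lim, hP_lim.apply_nhds 0⟩
end

section
/- Let V0 and W be real numbers, set V1 = V2 = W, assume V := W² + 2*V0*W ≠ 0, and let V̂ be the 3×3 real matrix with V̂_{mm} = 2*V_m and V̂_{mn} = -V_n for m ≠ n, and ρ_0 := W²/V. Then every sequence P : ℕ → ℝ³ satisfying P(k+1) - P(k) = -V̂ P(k) for all k ≥ 0 and P_0(0) + P_1(0) + P_2(0) = 1 has the explicit first coordinate P_0(k) = ρ_0 + (1 - 2*V0 - W)^k · (P_0(0) - ρ_0) for all k ≥ 0. -/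
/-!
A left eigenvector `w` of `V̂` with eigenvalue `c` turns the dynamics into the scalar recursion
`w · P(k+1) = (1 - c) (w · P(k))`. The all-ones vector `𝟙` has eigenvalue `0`, so the balance
condition persists. In the symmetric case `e₀ - ρ₀ 𝟙` has eigenvalue `2 V₀ + W`, and its pairing
with a balanced `P(k)` is the deviation `P₀(k) - ρ₀`.
-/

open Matrix

theorem dotProduct_eq_pow_mul_of_vecMul_eq_smul {n R : Type*} [Fintype n] [Ring R]
    {A : Matrix n n R} {w : n → R} {c : R} (hw : w ᵥ* A = c • w) {x : ℕ → n → R}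
    (hx : ∀ k, x (k + 1) - x k = -(A *ᵥ x k)) (k : ℕ) :
    w ⬝ᵥ x k = (1 - c) ^ k * (w ⬝ᵥ x 0) := by
  induction k with
  | zero => rw [pow_zero, one_mul]
  | succ k ih =>
    calc w ⬝ᵥ x (k + 1) = w ⬝ᵥ (x k - A *ᵥ x k) := by
          rw [sub_eq_add_neg, ← hx k, add_sub_cancel]
      _ = w ⬝ᵥ x k - c * (w ⬝ᵥ x k) := by
          rw [dotProduct_sub, dotProduct_mulVec, hw, smul_dotProduct, smul_eq_mul]
      _ = (1 - c) ^ (k + 1) * (w ⬝ᵥ x 0) := by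
          rw [← one_sub_mul, ih, pow_succ', mul_assoc]

theorem one_vecMul_dirMatrix (V0 V1 V2 : ℝ) : 1 ᵥ* dirMatrix V0 V1 V2 = 0 := by
  ext j
  rw [vecMul, one_dotProduct, Fin.sum_univ_three]
  fin_cases j <;> simp [dirMatrix, two_mul]

theorem single_sub_smul_one_vecMul_dirMatrix {V0 W ρ : ℝ} (hρ : (2 * V0 + W) * ρ = W) :
    (Pi.single 0 1 - ρ • 1) ᵥ* dirMatrix V0 W W =
      (2 * V0 + W) • (Pi.single 0 1 - ρ • 1) := by
  rw [sub_vecMul, smul_vecMul, one_vecMul_dirMatrix, smul_zero, sub_zero, single_one_vecMul]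
  ext j
  fin_cases j <;> simp [dirMatrix, mul_sub, hρ]

theorem symmetric_case_explicit (V0 W : ℝ)
    (hV : W^2 + 2*V0*W ≠ 0) (P : ℕ → Fin 3 → ℝ)
    (hP : ∀ k : ℕ, P (k+1) - P k = -((dirMatrix V0 W W).mulVec (P k)))
    (hinit : P 0 0 + P 0 1 + P 0 2 = 1) :
    ∀ k : ℕ, P k 0 = W^2 / (W^2 + 2*V0*W)
      + (1 - 2*V0 - W)^k * (P 0 0 - W^2 / (W^2 + 2*V0*W)) := by
  set ρ := W^2 / (W^2 + 2*V0*W)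
  have hρ : (2 * V0 + W) * ρ = W := by
    rw [← mul_div_assoc, div_eq_iff hV]
    ring
  have balance (k : ℕ) : 1 ⬝ᵥ P k = 1 := by
    rw [dotProduct_eq_pow_mul_of_vecMul_eq_smul (c := 0)
      (by rw [one_vecMul_dirMatrix, zero_smul]) hP, sub_zero, one_pow, one_mul,
      one_dotProduct, Fin.sum_univ_three, hinit]
  have deviation (k : ℕ) : (Pi.single 0 1 - ρ • 1) ⬝ᵥ P k = P k 0 - ρ := by
    rw [sub_dotProduct, single_one_dotProduct, smul_dotProduct, balance, smul_eq_mul, mul_one]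
  intro k
  have decay := dotProduct_eq_pow_mul_of_vecMul_eq_smul
    (single_sub_smul_one_vecMul_dirMatrix hρ) hP k
  rw [deviation, deviation, ← sub_sub] at decay
  exact sub_eq_iff_eq_add'.mp decay
end

section
/- Let V0, V1, V2 be strictly negative real numbers. Then V := V1*V2 + V0*V2 + V0*V1 > 0 and the equilibrium coordinates ρ_0 = V1*V2/V, ρ_1 = V0*V2/V, ρ_2 = V0*V1/V all satisfy 0 < ρ_m < 1; moreover every nonzero complex eigenvalue of the matrix V̂ (with V̂_{mm} = 2*V_m, V̂_{mn} = -V_n for m ≠ n) has strictly negative real part. -/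
/-!
The directing matrix factors as `V̂ = L * diag V`, where `L` is the Laplacian of the complete graph
on three vertices. So `-V̂` is the product of the positive semidefinite matrices `L = Cᴴ * C` and
`B = diag (-V)`. Apart from `0`, the spectrum of `Cᴴ * (C * B)` is that of the positive semidefinite
matrix `C * B * Cᴴ`, hence the nonzero eigenvalues of `V̂` are negative real numbers.
-/

open Matrix
open scoped ComplexOrder MatrixOrder

section PosSemidef

variable {n 𝕜 : Type*} [RCLike 𝕜]

theorem posSemidef_map_ofReal [Finite n] {A : Matrix n n ℝ} (hA : A.PosSemidef) :
    (A.map (RCLike.ofReal : ℝ → 𝕜)).PosSemidef := by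
  classical
  cases nonempty_fintype n
  obtain ⟨C, rfl⟩ := CStarAlgebra.nonneg_iff_eq_star_mul_self.mp hA.nonneg
  have map_eq : (star C * C).map (RCLike.ofReal : ℝ → 𝕜) =
      (C.map RCLike.ofReal)ᴴ * C.map RCLike.ofReal := by
    ext i j
    simp [Matrix.mul_apply, star_eq_conjTranspose]
  rw [map_eq]
  exact posSemidef_conjTranspose_mul_self _

variable [Fintype n] [DecidableEq n]

theorem nonneg_of_mem_spectrum_of_posSemidef {A : Matrix n n 𝕜} (hA : A.PosSemidef) {μ : 𝕜}
    (hμ : μ ∈ spectrum 𝕜 A) : 0 ≤ μ := by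
  rw [hA.isHermitian.spectrum_eq_image_range] at hμ
  obtain ⟨_, ⟨i, rfl⟩, rfl⟩ := hμ
  exact RCLike.ofReal_nonneg.mpr (hA.eigenvalues_nonneg i)

theorem nonneg_of_mem_spectrum_mul_of_posSemidef {A B : Matrix n n 𝕜} (hA : A.PosSemidef)
    (hB : B.PosSemidef) {μ : 𝕜} (hμ : μ ∈ spectrum 𝕜 (A * B)) : 0 ≤ μ := by
  obtain rfl | hμ0 := eq_or_ne μ 0
  · rfl
  obtain ⟨C, rfl⟩ := CStarAlgebra.nonneg_iff_eq_star_mul_self.mp hA.nonneg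
  rw [mul_assoc] at hμ
  have hμ' : μ ∈ spectrum 𝕜 (C * B * star C) \ {0} := by
    rw [spectrum.nonzero_mul_comm]
    exact ⟨hμ, hμ0⟩
  exact nonneg_of_mem_spectrum_of_posSemidef (hB.mul_mul_conjTranspose_same C) hμ'.1

theorem nonpos_of_mem_spectrum_lapMatrix_mul_diagonal (G : SimpleGraph n) [DecidableRel G.Adj]
    {v : n → ℝ} (hv : v ≤ 0) {μ : 𝕜}
    (hμ : μ ∈ spectrum 𝕜 ((G.lapMatrix ℝ * diagonal v).map (RCLike.ofReal : ℝ → 𝕜))) :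
    μ ≤ 0 := by
  have hL : ((G.lapMatrix ℝ).map (RCLike.ofReal : ℝ → 𝕜)).PosSemidef :=
    posSemidef_map_ofReal (G.posSemidef_lapMatrix ℝ)
  have hD : ((diagonal (-v)).map (RCLike.ofReal : ℝ → 𝕜)).PosSemidef :=
    posSemidef_map_ofReal (.diagonal (neg_nonneg.mpr hv))
  have factor : (G.lapMatrix ℝ * diagonal v).map (RCLike.ofReal : ℝ → 𝕜) =
      -((G.lapMatrix ℝ).map RCLike.ofReal * (diagonal (-v)).map RCLike.ofReal) := by
    ext i j
    simp
  rw [factor, ← spectrum.neg_eq, Set.mem_neg] at hμ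
  exact neg_nonneg.mp (nonneg_of_mem_spectrum_mul_of_posSemidef hL hD hμ)

end PosSemidef

theorem div_sum_mem_Ioo {ι 𝕜 : Type*} [Fintype ι] [Nontrivial ι] [Semifield 𝕜]
    [LinearOrder 𝕜] [IsStrictOrderedRing 𝕜] {w : ι → 𝕜} (hw : ∀ i, 0 < w i) (i : ι) :
    w i / ∑ j, w j ∈ Set.Ioo 0 1 := by
  obtain ⟨k, hk⟩ := exists_ne i
  have lt_sum : w i < ∑ j, w j :=
    Finset.single_lt_sum hk (Finset.mem_univ i) (Finset.mem_univ k) (hw k)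
      fun j _ _ ↦ (hw j).le
  have sum_pos : 0 < ∑ j, w j := (hw i).trans lt_sum
  exact ⟨div_pos (hw i) sum_pos, (div_lt_one sum_pos).mpr lt_sum⟩

theorem equil_eq_div_sum (V0 V1 V2 : ℝ) (m : Fin 3) :
    equil V0 V1 V2 m =
      ![V1 * V2, V0 * V2, V0 * V1] m / ∑ j, ![V1 * V2, V0 * V2, V0 * V1] j := by
  fin_cases m <;> simp [equil, Fin.sum_univ_three]

theorem dirMatrix_eq_lapMatrix_mul_diagonal (V0 V1 V2 : ℝ) :
    dirMatrix V0 V1 V2 =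
      (⊤ : SimpleGraph (Fin 3)).lapMatrix ℝ * diagonal ![V0, V1, V2] := by
  ext i j
  fin_cases i <;> fin_cases j <;>
    simp [dirMatrix, SimpleGraph.lapMatrix, SimpleGraph.degMatrix]

theorem nonpos_of_hasEigenvalue_dirMatrix {V0 V1 V2 : ℝ} (h0 : V0 ≤ 0) (h1 : V1 ≤ 0)
    (h2 : V2 ≤ 0) {μ : ℂ}
    (hμ : Module.End.HasEigenvalue
      (Matrix.mulVecLin ((dirMatrix V0 V1 V2).map Complex.ofReal)) μ) :
    μ ≤ 0 := by
  rw [← toLin'_apply', Module.End.hasEigenvalue_iff_mem_spectrum, spectrum_toLin',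
    dirMatrix_eq_lapMatrix_mul_diagonal] at hμ
  have hV : ![V0, V1, V2] ≤ 0 := by
    intro i
    fin_cases i <;> assumption
  exact nonpos_of_mem_spectrum_lapMatrix_mul_diagonal ⊤ hV hμ

theorem repulsive_spectral (V0 V1 V2 : ℝ)
    (h0 : V0 < 0) (h1 : V1 < 0) (h2 : V2 < 0) :
    0 < V1*V2 + V0*V2 + V0*V1 ∧
    (∀ m : Fin 3, 0 < equil V0 V1 V2 m ∧ equil V0 V1 V2 m < 1) ∧
    (∀ μ : ℂ, Module.End.HasEigenvalue
        (Matrix.mulVecLin ((dirMatrix V0 V1 V2).map Complex.ofReal)) μ →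
        μ ≠ 0 → μ.re < 0) := by
  have weights_pos : ∀ m, 0 < ![V1 * V2, V0 * V2, V0 * V1] m := by
    simp [Fin.forall_fin_succ, mul_pos_of_neg_of_neg, h0, h1, h2]
  refine ⟨?_, fun m ↦ ?_, fun μ hμ hne ↦ ?_⟩
  · simpa [Fin.sum_univ_three] using Finset.sum_pos (fun m _ ↦ weights_pos m) Finset.univ_nonempty
  · rw [equil_eq_div_sum]
    exact div_sum_mem_Ioo weights_pos m
  · have hμ_neg : μ < 0 := (nonpos_of_hasEigenvalue_dirMatrix h0.le h1.le h2.le hμ).lt_of_ne hne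
    exact (Complex.neg_iff.mp hμ_neg).1
end
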